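/- For every real x > 0, ∫₀^∞ e^{-2πx²τ/3} · (1 - √(3/2) · η(6iτ)η((3/2)iτ)/(η(2iτ)η(3iτ))) · η(2iτ) dτ = √3 · tanh(2πx/3) / (4x · cosh(πx)). -/

import Mathlib

open scoped Real

noncomputable def eta (z : ℂ) : ℂ :=
  Complex.exp (Real.pi * Complex.I * z / 12) *
    ∏' n : ℕ, (1 - Complex.exp (2 * Real.pi * Complex.I * ((n : ℂ) + 1) * z))

/-!
By the Jacobi triple product, both eta expressions in the integrand are alternating theta series:
`η(2iτ) = θ(6πτ, 1/6)` is Euler's pentagonal number theorem and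
`η(6iτ) η(3iτ/2) / η(3iτ) = θ(6πτ, 1/4)` is an identity of Gauss, where
`θ(t, a) = ∑ (-1)ᵏ exp(-t (k + a)²)`. Integrating termwise against `exp(-2πx²τ/3)` turns `θ(6πτ, a)`
into `1 / (6π)` times the partial fraction series `∑ (-1)ᵏ / ((k + a)² + (x / 3)²)`, which the
expansion of `π / sin` sums to an elementary function of `x`. Only an identity between hyperbolic
functions of `πx / 3` then remains.
-/

open Filter Finset MeasureTheory Topology

section QPochhammer

/-- The finite `q`-Pochhammer symbol `(a; q)_n`. -/
def qPochhammer {R : Type*} [CommRing R] (a q : R) (n : ℕ) : R :=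
  ∏ i ∈ range n, (1 - a * q ^ i)

/-- The infinite `q`-Pochhammer symbol `(a; q)_∞`, meaningful for `‖q‖ < 1`. -/
noncomputable def qPochhammerInf {R : Type*} [CommRing R] [TopologicalSpace R] (a q : R) : R :=
  ∏' n : ℕ, (1 - a * q ^ n)

lemma qPochhammer_succ {R : Type*} [CommRing R] (a q : R) (n : ℕ) :
    qPochhammer a q (n + 1) = qPochhammer a q n * (1 - a * q ^ n) :=
  prod_range_succ _ _

lemma qPochhammer_mul_right {R : Type*} [CommRing R] (a q : R) (m n : ℕ) :
    qPochhammer a q (m * n) = ∏ i ∈ range m, qPochhammer (a * q ^ i) (q ^ m) n := by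
  induction n with
  | zero => simp [qPochhammer]
  | succ n ih =>
    simp only [qPochhammer_succ, prod_mul_distrib, ← ih]
    rw [qPochhammer, qPochhammer, mul_add_one, prod_range_add]
    congr! 3 with i
    ring

variable {𝕜 : Type*} [NormedField 𝕜] {q : 𝕜}

lemma summable_norm_mul_pow (a : 𝕜) (hq : ‖q‖ < 1) : Summable fun n : ℕ ↦ ‖-(a * q ^ n)‖ := by
  simpa only [norm_neg, norm_mul, norm_pow] using
    (summable_geometric_of_lt_one (norm_nonneg q) hq).mul_left ‖a‖

lemma qPochhammer_self_ne_zero (hq : ‖q‖ < 1) (n : ℕ) : qPochhammer q q n ≠ 0 := by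
  refine prod_ne_zero_iff.mpr fun i _ h ↦ ?_
  have hlt : ‖q ^ (i + 1)‖ < 1 := by
    rw [norm_pow]
    exact pow_lt_one₀ (norm_nonneg q) hq i.succ_ne_zero
  rw [pow_succ', ← sub_eq_zero.mp h, norm_one] at hlt
  exact lt_irrefl _ hlt

variable [CompleteSpace 𝕜]

lemma multipliable_one_sub_mul_pow (a : 𝕜) (hq : ‖q‖ < 1) :
    Multipliable fun n : ℕ ↦ 1 - a * q ^ n := by
  simpa only [sub_eq_add_neg] using multipliable_one_add_of_summable (summable_norm_mul_pow a hq)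

lemma tendsto_qPochhammer (a : 𝕜) (hq : ‖q‖ < 1) :
    Tendsto (qPochhammer a q) atTop (𝓝 (qPochhammerInf a q)) :=
  (multipliable_one_sub_mul_pow a hq).tendsto_prod_tprod_nat

lemma qPochhammerInf_self_ne_zero (hq : ‖q‖ < 1) : qPochhammerInf q q ≠ 0 := by
  have hfactor (n : ℕ) : 1 + -(q * q ^ n) ≠ 0 := by
    have h := qPochhammer_self_ne_zero hq (n + 1)
    rw [qPochhammer_succ, sub_eq_add_neg] at h
    exact right_ne_zero_of_mul h
  simpa only [qPochhammerInf, sub_eq_add_neg] using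
    tprod_one_add_ne_zero_of_summable hfactor (summable_norm_mul_pow q hq)

lemma qPochhammerInf_eq_prod_residues (a : 𝕜) (hq : ‖q‖ < 1) {m : ℕ} (hm : m ≠ 0) :
    qPochhammerInf a q = ∏ i ∈ range m, qPochhammerInf (a * q ^ i) (q ^ m) := by
  have hqm : ‖q ^ m‖ < 1 := by
    rw [norm_pow]
    exact pow_lt_one₀ (norm_nonneg q) hq hm
  have hleft : Tendsto (fun n ↦ qPochhammer a q (m * n)) atTop (𝓝 (qPochhammerInf a q)) :=
    (tendsto_qPochhammer a hq).comp (tendsto_id.const_mul_atTop' (Nat.pos_of_ne_zero hm))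
  simp only [qPochhammer_mul_right] at hleft
  exact tendsto_nhds_unique hleft (tendsto_finsetProd _ fun i _ ↦ tendsto_qPochhammer _ hqm)

end QPochhammer

section GaussBinom

variable {R : Type*} [CommRing R]

/-- The Gaussian binomial coefficient `[n; k]_q`, defined by the `q`-Pascal rule so that it makes
sense in every commutative ring. -/
def gaussBinom (q : R) : ℕ → ℕ → R
  | _, 0 => 1
  | 0, _ + 1 => 0
  | n + 1, k + 1 => gaussBinom q n k + q ^ (k + 1) * gaussBinom q n (k + 1)

@[simp]
lemma gaussBinom_zero_right (q : R) (n : ℕ) : gaussBinom q n 0 = 1 := by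
  cases n <;> rfl

lemma gaussBinom_succ_succ (q : R) (n k : ℕ) :
    gaussBinom q (n + 1) (k + 1) = gaussBinom q n k + q ^ (k + 1) * gaussBinom q n (k + 1) :=
  rfl

lemma gaussBinom_eq_zero_of_lt (q : R) {n k : ℕ} (h : n < k) : gaussBinom q n k = 0 := by
  induction n generalizing k with
  | zero => obtain ⟨k, rfl⟩ := Nat.exists_eq_succ_of_ne_zero h.ne'; rfl
  | succ n ih =>
    obtain ⟨k, rfl⟩ := Nat.exists_eq_succ_of_ne_zero (Nat.ne_zero_of_lt h)
    rw [gaussBinom_succ_succ, ih (by lia), ih (by lia), mul_zero, add_zero]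

lemma gaussBinom_self (q : R) (n : ℕ) : gaussBinom q n n = 1 := by
  induction n with
  | zero => rfl
  | succ n ih =>
    rw [gaussBinom_succ_succ, ih, gaussBinom_eq_zero_of_lt q n.lt_succ_self, mul_zero, add_zero]

lemma gaussBinom_add_mul_qPochhammer_mul_qPochhammer (q : R) (m n : ℕ) :
    gaussBinom q (m + n) m * (qPochhammer q q m * qPochhammer q q n) =
      qPochhammer q q (m + n) := by
  induction m generalizing n with
  | zero => simp [qPochhammer]
  | succ m ihm =>
    induction n with
    | zero => simp [gaussBinom_self, qPochhammer]
    | succ n ihn =>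
      have hm := ihm (n + 1)
      rw [show m + 1 + (n + 1) = m + 1 + n + 1 by ring, gaussBinom_succ_succ,
        qPochhammer_succ q q (m + 1 + n), show m + 1 + n = m + (n + 1) by ring] at *
      simp only [qPochhammer_succ q q m, qPochhammer_succ q q n] at *
      linear_combination (1 - q * q ^ m) * hm + q ^ (m + 1) * (1 - q * q ^ n) * ihn

lemma sum_gaussBinom_succ (q : R) (n : ℕ) (f : ℕ → R) :
    ∑ j ∈ range (n + 2), gaussBinom q (n + 1) j * f j =
      ∑ j ∈ range (n + 1), gaussBinom q n j * (f (j + 1) + q ^ j * f j) := by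
  have hshift : ∑ j ∈ range (n + 1), q ^ (j + 1) * gaussBinom q n (j + 1) * f (j + 1) + f 0 =
      ∑ j ∈ range (n + 1), q ^ j * gaussBinom q n j * f j := by
    have h := sum_range_succ' (fun j ↦ q ^ j * gaussBinom q n j * f j) (n + 1)
    rw [sum_range_succ, gaussBinom_eq_zero_of_lt q n.lt_succ_self] at h
    simpa using h.symm
  rw [sum_range_succ']
  simp only [gaussBinom_succ_succ, add_mul, mul_add, sum_add_distrib, gaussBinom_zero_right,
    one_mul, add_assoc, hshift]
  simp only [mul_left_comm, mul_assoc]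

end GaussBinom

section FiniteJacobiTripleProduct

lemma q_binomial_theorem {R : Type*} [CommRing R] (q z : R) (m : ℕ) :
    ∏ i ∈ range m, (1 + z * q ^ (2 * i + 1)) =
      ∑ j ∈ range (m + 1), gaussBinom (q ^ 2) m j * (q ^ j ^ 2 * z ^ j) := by
  induction m generalizing z with
  | zero => simp
  | succ m ih =>
    have hstep (i : ℕ) : 1 + z * q ^ (2 * (i + 1) + 1) = 1 + z * q ^ 2 * q ^ (2 * i + 1) := by ring
    rw [sum_gaussBinom_succ, prod_range_succ']
    simp only [hstep, ih, sum_mul]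
    refine sum_congr rfl fun j _ ↦ ?_
    ring

variable {𝕜 : Type*} [Field 𝕜]

lemma finite_jacobi_triple_product (q : 𝕜) {z : 𝕜} (hz : z ≠ 0) (m n : ℕ) :
    (∏ i ∈ range m, (1 + z * q ^ (2 * i + 1))) * ∏ i ∈ range n, (1 + z⁻¹ * q ^ (2 * i + 1)) =
      ∑ j ∈ range (m + n + 1),
        gaussBinom (q ^ 2) (m + n) j * (q ^ (j - n : ℤ).natAbs ^ 2 * z ^ (j - n : ℤ)) := by
  induction n with
  | zero => simpa using q_binomial_theorem q z m
  | succ n ih =>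
    rw [prod_range_succ, ← mul_assoc, ih, ← add_assoc, sum_gaussBinom_succ, sum_mul]
    refine sum_congr rfl fun j _ ↦ ?_
    have hexp : 2 * j + (j - (n + 1 : ℕ) : ℤ).natAbs ^ 2 =
        2 * n + 1 + (j - n : ℤ).natAbs ^ 2 := by
      zify
      simp only [sq_abs]
      ring
    have hpow : (q ^ 2) ^ j * q ^ (j - (n + 1 : ℕ) : ℤ).natAbs ^ 2 =
        q ^ (2 * n + 1) * q ^ (j - n : ℤ).natAbs ^ 2 := by
      rw [← pow_mul, ← pow_add, hexp, pow_add]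
    have hz' : z ^ (j - (n + 1 : ℕ) : ℤ) = z⁻¹ * z ^ (j - n : ℤ) := by
      rw [Nat.cast_succ, ← sub_sub, zpow_sub_one₀ hz, mul_comm]
    rw [← mul_assoc ((q ^ 2) ^ j), hpow, hz', Nat.cast_succ, Nat.cast_succ,
      add_sub_add_right_eq_sub]
    ring

end FiniteJacobiTripleProduct

section JacobiTripleProduct

variable {𝕜 : Type*} [NormedField 𝕜] {q : 𝕜}

lemma gaussBinom_add_left_eq_div (hq : ‖q‖ < 1) (m n : ℕ) :
    gaussBinom q (m + n) m =
      qPochhammer q q (m + n) / (qPochhammer q q m * qPochhammer q q n) := by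
  rw [eq_div_iff (mul_ne_zero (qPochhammer_self_ne_zero hq m) (qPochhammer_self_ne_zero hq n)),
    gaussBinom_add_mul_qPochhammer_mul_qPochhammer]

lemma summable_norm_pow_sq_mul_pow (hq : ‖q‖ < 1) (z : 𝕜) :
    Summable fun n : ℕ ↦ ‖q ^ n ^ 2 * z ^ n‖ := by
  have hlim : Tendsto (fun n : ℕ ↦ ‖q ^ n * z‖) atTop (𝓝 0) := by
    simpa only [zero_mul, norm_zero] using
      ((tendsto_pow_atTop_nhds_zero_of_norm_lt_one hq).mul_const z).norm
  refine summable_geometric_two.of_norm_bounded_eventually_nat ?_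
  filter_upwards [hlim.eventually_le_const one_half_pos] with n hn
  rw [norm_norm, sq, pow_mul, ← mul_pow, norm_pow]
  gcongr

lemma summable_norm_pow_sq_mul_zpow (hq : ‖q‖ < 1) (z : 𝕜) :
    Summable fun k : ℤ ↦ ‖q ^ k.natAbs ^ 2 * z ^ k‖ := by
  refine .of_nat_of_neg ?_ ?_
  · simpa only [Int.natAbs_natCast, zpow_natCast] using summable_norm_pow_sq_mul_pow hq z
  · simpa only [Int.natAbs_neg, Int.natAbs_natCast, zpow_neg, zpow_natCast, ← inv_pow] using
      summable_norm_pow_sq_mul_pow hq z⁻¹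

/-- The Gaussian binomial coefficient `[2n; n + k]_q` for `k : ℤ`, which is the coefficient of the
`k`-th theta term in the finite Jacobi triple product. -/
def centralGaussBinom {R : Type*} [CommRing R] (q : R) (n : ℕ) (k : ℤ) : R :=
  if -n ≤ k then gaussBinom q (n + n) (k + n).toNat else 0

lemma prod_mul_prod_eq_tsum_centralGaussBinom (q : 𝕜) {z : 𝕜} (hz : z ≠ 0) (n : ℕ) :
    qPochhammer (-(z * q)) (q ^ 2) n * qPochhammer (-(z⁻¹ * q)) (q ^ 2) n =
      ∑' k : ℤ, centralGaussBinom (q ^ 2) n k * (q ^ k.natAbs ^ 2 * z ^ k) := by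
  have hfactor (w : 𝕜) (i : ℕ) : 1 - -(w * q) * (q ^ 2) ^ i = 1 + w * q ^ (2 * i + 1) := by ring
  have hinj : Function.Injective fun j : ℕ ↦ (j - n : ℤ) := fun i j h ↦ by simpa using h
  have hcoeff (j : ℕ) : centralGaussBinom (q ^ 2) n (j - n) = gaussBinom (q ^ 2) (n + n) j := by
    rw [centralGaussBinom, if_pos (by lia), sub_add_cancel, Int.toNat_natCast]
  simp only [qPochhammer, hfactor, finite_jacobi_triple_product q hz n n]
  rw [← hinj.tsum_eq, tsum_eq_sum (s := range (n + n + 1))]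
  · simp only [hcoeff]
  · intro j hj
    rw [hcoeff, gaussBinom_eq_zero_of_lt _ (by simpa using hj), zero_mul]
  · intro k hk
    refine ⟨(k + n).toNat, ?_⟩
    have hk' : -(n : ℤ) ≤ k := by
      by_contra hlt
      exact hk (by simp only [centralGaussBinom, if_neg hlt, zero_mul])
    lia

variable [CompleteSpace 𝕜]

lemma exists_norm_gaussBinom_le (hq : ‖q‖ < 1) : ∃ C, ∀ n k, ‖gaussBinom q n k‖ ≤ C := by
  have hP := tendsto_qPochhammer q hq
  obtain ⟨A, hA⟩ := hP.norm.bddAbove_range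
  obtain ⟨B, hB⟩ := (hP.inv₀ (qPochhammerInf_self_ne_zero hq)).norm.bddAbove_range
  rw [mem_upperBounds, Set.forall_mem_range] at hA hB
  have hA0 : 0 ≤ A := (norm_nonneg _).trans (hA 0)
  have hB0 : 0 ≤ B := (norm_nonneg _).trans (hB 0)
  refine ⟨A * (B * B), fun n k ↦ ?_⟩
  rcases lt_or_ge n k with hlt | hle
  · rw [gaussBinom_eq_zero_of_lt q hlt, norm_zero]
    positivity
  · obtain ⟨l, rfl⟩ := Nat.exists_eq_add_of_le hle
    rw [gaussBinom_add_left_eq_div hq, div_eq_mul_inv, mul_inv, norm_mul, norm_mul]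
    gcongr
    exacts [hA _, hB _, hB _]

lemma tendsto_gaussBinom_add (hq : ‖q‖ < 1) {ι : Type*} {l : Filter ι} {m n : ι → ℕ}
    (hm : Tendsto m l atTop) (hn : Tendsto n l atTop) :
    Tendsto (fun i ↦ gaussBinom q (m i + n i) (m i)) l (𝓝 (qPochhammerInf q q)⁻¹) := by
  have hP := tendsto_qPochhammer q hq
  have hP0 := qPochhammerInf_self_ne_zero hq
  simp only [gaussBinom_add_left_eq_div hq]
  have hmn : Tendsto (fun i ↦ m i + n i) l atTop :=
    tendsto_atTop_mono (fun i ↦ Nat.le_add_right (m i) (n i)) hm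
  have h := (hP.comp hmn).div ((hP.comp hm).mul (hP.comp hn)) (mul_ne_zero hP0 hP0)
  rwa [div_mul_cancel_left₀ hP0] at h

lemma exists_norm_centralGaussBinom_le (hq : ‖q‖ < 1) :
    ∃ C, ∀ n k, ‖centralGaussBinom q n k‖ ≤ C := by
  obtain ⟨C, hC⟩ := exists_norm_gaussBinom_le hq
  refine ⟨C, fun n k ↦ ?_⟩
  unfold centralGaussBinom
  split_ifs
  · exact hC _ _
  · simpa only [norm_zero] using (norm_nonneg _).trans (hC 0 0)

lemma tendsto_centralGaussBinom (hq : ‖q‖ < 1) (k : ℤ) :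
    Tendsto (centralGaussBinom q · k) atTop (𝓝 (qPochhammerInf q q)⁻¹) := by
  have htop (k : ℤ) : Tendsto (fun n : ℕ ↦ (k + n).toNat) atTop atTop :=
    tendsto_atTop.mpr fun b ↦ (eventually_ge_atTop (b + k.natAbs)).mono fun n hn ↦ by lia
  refine (tendsto_gaussBinom_add hq (htop k) (htop (-k))).congr' ?_
  filter_upwards [eventually_ge_atTop k.natAbs] with n hn
  rw [centralGaussBinom, if_pos (by lia), show (k + n).toNat + (-k + n).toNat = n + n by lia]

lemma jacobi_triple_product (hq : ‖q‖ < 1) {z : 𝕜} (hz : z ≠ 0) :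
    ∑' k : ℤ, q ^ k.natAbs ^ 2 * z ^ k =
      qPochhammerInf (q ^ 2) (q ^ 2) *
        (qPochhammerInf (-(z * q)) (q ^ 2) * qPochhammerInf (-(z⁻¹ * q)) (q ^ 2)) := by
  have hq2 : ‖q ^ 2‖ < 1 := by
    rw [norm_pow]
    exact pow_lt_one₀ (norm_nonneg q) hq two_ne_zero
  obtain ⟨C, hC⟩ := exists_norm_centralGaussBinom_le hq2
  have hsum : Tendsto
      (fun n ↦ ∑' k : ℤ, centralGaussBinom (q ^ 2) n k * (q ^ k.natAbs ^ 2 * z ^ k)) atTop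
      (𝓝 (∑' k : ℤ, (qPochhammerInf (q ^ 2) (q ^ 2))⁻¹ * (q ^ k.natAbs ^ 2 * z ^ k))) := by
    refine tendsto_tsum_of_dominated_convergence
      ((summable_norm_pow_sq_mul_zpow hq z).mul_left C)
      (fun k ↦ (tendsto_centralGaussBinom hq2 k).mul_const _) (.of_forall fun n k ↦ ?_)
    rw [norm_mul]
    gcongr
    exact hC n k
  have hprod := (tendsto_qPochhammer (-(z * q)) hq2).mul (tendsto_qPochhammer (-(z⁻¹ * q)) hq2)
  simp only [prod_mul_prod_eq_tsum_centralGaussBinom q hz] at hprod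
  rw [tendsto_nhds_unique hprod hsum, tsum_mul_left,
    mul_inv_cancel_left₀ (qPochhammerInf_self_ne_zero hq2)]

end JacobiTripleProduct

section ThetaSpecialisations

variable {𝕜 : Type*} [NormedField 𝕜] [CompleteSpace 𝕜] {q : 𝕜}

lemma euler_pentagonal_number_theorem (hq : ‖q‖ < 1) (hq0 : q ≠ 0) :
    ∑' k : ℤ, (q ^ 3) ^ k.natAbs ^ 2 * (-q) ^ k = qPochhammerInf (q ^ 2) (q ^ 2) := by
  have hpow {n : ℕ} (hn : n ≠ 0) : ‖q ^ n‖ < 1 := by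
    simpa only [norm_pow] using pow_lt_one₀ (norm_nonneg q) hq hn
  have hz : (-q)⁻¹ * q ^ 3 = -q ^ 2 := by
    field_simp
  rw [jacobi_triple_product (hpow three_ne_zero) (neg_ne_zero.mpr hq0), hz,
    qPochhammerInf_eq_prod_residues (q ^ 2) (hpow two_ne_zero) three_ne_zero]
  simp only [prod_range_succ, prod_range_zero]
  ring_nf

/-- Gauss's evaluation of `∑ q ^ (2 * k ^ 2 + k)`, with `q` replaced by `-q`. -/
lemma gauss_triangular_number_theorem (hq : ‖q‖ < 1) (hq0 : q ≠ 0) :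
    (∑' k : ℤ, (q ^ 2) ^ k.natAbs ^ 2 * (-q) ^ k) * qPochhammerInf (q ^ 2) (q ^ 2) =
      qPochhammerInf (q ^ 4) (q ^ 4) * qPochhammerInf q q := by
  have hq2 : ‖q ^ 2‖ < 1 := by
    simpa only [norm_pow] using pow_lt_one₀ (norm_nonneg q) hq two_ne_zero
  have hz : (-q)⁻¹ * q ^ 2 = -q := by
    field_simp
  rw [jacobi_triple_product hq2 (neg_ne_zero.mpr hq0), hz,
    qPochhammerInf_eq_prod_residues (q ^ 2) hq2 two_ne_zero,
    qPochhammerInf_eq_prod_residues q hq four_ne_zero]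
  simp only [prod_range_succ, prod_range_zero]
  ring_nf

end ThetaSpecialisations

section EtaOnImaginaryAxis

/-- The alternating theta function `∑ (-1) ^ k * exp (-t * (k + a) ^ 2)`. -/
noncomputable def altTheta (t a : ℝ) : ℝ :=
  ∑' k : ℤ, (-1) ^ k * Real.exp (-t * (k + a) ^ 2)

lemma neg_one_zpow_mul_exp_eq (t a : ℝ) (k : ℤ) :
    (-1) ^ k * Real.exp (-t * (k + a) ^ 2) = Real.exp (-t * a ^ 2) *
      (Real.exp (-t) ^ k.natAbs ^ 2 * (-Real.exp (-t * (2 * a))) ^ k) := by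
  have hsq : ((k.natAbs ^ 2 : ℕ) : ℝ) = (k : ℝ) ^ 2 := by
    rw [Nat.cast_pow, Nat.cast_natAbs, Int.cast_abs, sq_abs]
  have hexp : Real.exp (-t * (k + a) ^ 2) =
      Real.exp (-t * a ^ 2) * Real.exp (k ^ 2 * -t) * Real.exp (-t * (2 * a) * k) := by
    rw [← Real.exp_add, ← Real.exp_add]
    ring_nf
  rw [neg_eq_neg_one_mul (Real.exp _), mul_zpow, ← Real.exp_nat_mul,
    ← Real.rpow_intCast (Real.exp _), ← Real.exp_mul, hsq, hexp]
  ring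

lemma norm_exp_neg_lt_one {t : ℝ} (ht : 0 < t) : ‖Real.exp (-t)‖ < 1 := by
  rwa [Real.norm_eq_abs, Real.abs_exp, Real.exp_lt_one_iff, neg_lt_zero]

lemma hasSum_altTheta {t : ℝ} (ht : 0 < t) (a : ℝ) :
    HasSum (fun k : ℤ ↦ (-1) ^ k * Real.exp (-t * (k + a) ^ 2)) (altTheta t a) := by
  refine Summable.hasSum ?_
  simp only [neg_one_zpow_mul_exp_eq]
  exact (summable_norm_pow_sq_mul_zpow (norm_exp_neg_lt_one ht) _).of_norm.mul_left _

lemma altTheta_eq_exp_mul_tsum (t a : ℝ) :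
    altTheta t a = Real.exp (-t * a ^ 2) *
      ∑' k : ℤ, Real.exp (-t) ^ k.natAbs ^ 2 * (-Real.exp (-t * (2 * a))) ^ k := by
  simp only [altTheta, neg_one_zpow_mul_exp_eq, tsum_mul_left]

/-- The real function `s ↦ η(is)`, written through the Euler product `(x; x)_∞` at
`x = exp (-2πs)`. -/
noncomputable def etaImag (s : ℝ) : ℝ :=
  Real.exp (-(π * s / 12)) *
    qPochhammerInf (Real.exp (-(2 * π * s))) (Real.exp (-(2 * π * s)))

lemma eta_ofReal_mul_I {s : ℝ} (hs : 0 < s) : eta (s * Complex.I) = etaImag s := by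
  have hmul := multipliable_one_sub_mul_pow (Real.exp (-(2 * π * s)))
    (norm_exp_neg_lt_one (t := 2 * π * s) (by positivity))
  have hcast := hmul.map_tprod Complex.ofRealHom Complex.continuous_ofReal
  rw [eta, etaImag, qPochhammerInf, Complex.ofReal_mul, ← Complex.ofRealHom_eq_coe (∏' _, _), hcast]
  simp only [Complex.ofRealHom_eq_coe]
  push_cast
  simp only [← Complex.exp_nat_mul, ← Complex.exp_add]
  congr! 2 with n
  · linear_combination (π * s / 12) * Complex.I_sq
  · funext n
    congr 2
    linear_combination (2 * π * (n + 1) * s) * Complex.I_sq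

lemma etaImag_ne_zero {s : ℝ} (hs : 0 < s) : etaImag s ≠ 0 :=
  mul_ne_zero (Real.exp_ne_zero _)
    (qPochhammerInf_self_ne_zero (norm_exp_neg_lt_one (by positivity)))

lemma altTheta_one_sixth {s : ℝ} (hs : 0 < s) : altTheta (3 * π * s) (1 / 6) = etaImag s := by
  have hpow (n : ℕ) : Real.exp (-(π * s)) ^ n = Real.exp (-(n * π * s)) := by
    rw [← Real.exp_nat_mul]
    ring_nf
  have hsum := euler_pentagonal_number_theorem
    (norm_exp_neg_lt_one (t := π * s) (by positivity)) (Real.exp_ne_zero _)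
  simp only [hpow, Nat.cast_ofNat] at hsum
  rw [altTheta_eq_exp_mul_tsum, etaImag, ← hsum]
  ring_nf

lemma altTheta_one_fourth_mul_etaImag {s : ℝ} (hs : 0 < s) :
    altTheta (2 * π * s) (1 / 4) * etaImag s = etaImag (2 * s) * etaImag (s / 2) := by
  have hpow (n : ℕ) : Real.exp (-(π * s)) ^ n = Real.exp (-(n * π * s)) := by
    rw [← Real.exp_nat_mul]
    ring_nf
  have hsum := gauss_triangular_number_theorem
    (norm_exp_neg_lt_one (t := π * s) (by positivity)) (Real.exp_ne_zero _)
  have hexp : Real.exp (-(2 * π * s) * (1 / 4) ^ 2) * Real.exp (-(π * s / 12)) =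
      Real.exp (-(π * (2 * s) / 12)) * Real.exp (-(π * (s / 2) / 12)) := by
    rw [← Real.exp_add, ← Real.exp_add]
    ring_nf
  simp only [hpow, Nat.cast_ofNat] at hsum
  rw [altTheta_eq_exp_mul_tsum, etaImag, etaImag, etaImag,
    mul_mul_mul_comm (Real.exp (-(π * (2 * s) / 12))), mul_mul_mul_comm, hexp]
  congr 1
  convert! hsum using 3 <;> ring_nf

end EtaOnImaginaryAxis

section LaplaceTransform

lemma integrable_of_hasSum {α ι E : Type*} [MeasurableSpace α] {μ : Measure α} [Countable ι]
    [NormedAddCommGroup E] {F : ι → α → E} {f : α → E} (hF : ∀ i, Integrable (F i) μ)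
    (hsum : Summable fun i ↦ ∫ x, ‖F i x‖ ∂μ) (hf : ∀ᵐ x ∂μ, HasSum (F · x) (f x)) :
    Integrable f μ := by
  refine ⟨aestronglyMeasurable_of_tendsto_ae atTop
    (fun s ↦ (integrable_finsetSum s fun i _ ↦ hF i).aestronglyMeasurable) ?_, ?_⟩
  · filter_upwards [hf] with x hx
    simpa only [HasSum, SummationFilter.unconditional_filter, Finset.sum_apply] using hx
  calc ∫⁻ x, ‖f x‖ₑ ∂μ ≤ ∫⁻ x, ∑' i, ‖F i x‖ₑ ∂μ :=
        lintegral_mono_ae (hf.mono fun x hx ↦ hx.tsum_eq ▸ enorm_tsum_le_tsum_enorm)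
    _ = ∑' i, ∫⁻ x, ‖F i x‖ₑ ∂μ := lintegral_tsum fun i ↦ (hF i).aestronglyMeasurable.enorm
    _ = ∑' i, ENNReal.ofReal (∫ x, ‖F i x‖ ∂μ) := by
        simp only [ofReal_integral_norm_eq_lintegral_enorm (hF _)]
    _ < ⊤ := hsum.tsum_ofReal_lt_top

lemma integral_exp_neg_mul_Ioi_zero {r : ℝ} (hr : 0 < r) :
    ∫ τ in Set.Ioi (0 : ℝ), Real.exp (-r * τ) = 1 / r := by
  rw [integral_exp_mul_Ioi (neg_lt_zero.mpr hr), mul_zero, Real.exp_zero, neg_div_neg_eq]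

section ExponentialSeries

variable {ι : Type*} {b r : ι → ℝ} (hr : ∀ i, 0 < r i)

include hr in
lemma integrableOn_const_mul_exp_neg_mul (i : ι) :
    IntegrableOn (fun τ ↦ b i * Real.exp (-r i * τ)) (Set.Ioi 0) :=
  (integrableOn_exp_mul_Ioi (neg_lt_zero.mpr (hr i)) 0).const_mul _

variable (hsum : Summable fun i ↦ |b i| / r i)
include hr hsum

lemma summable_integral_norm_const_mul_exp_neg_mul :
    Summable fun i ↦ ∫ τ in Set.Ioi (0 : ℝ), ‖b i * Real.exp (-r i * τ)‖ := by
  simpa only [norm_mul, Real.norm_eq_abs, Real.abs_exp, integral_const_mul,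
    integral_exp_neg_mul_Ioi_zero (hr _), mul_one_div] using hsum

variable [Countable ι] {f : ℝ → ℝ}
  (hf : ∀ τ, 0 < τ → HasSum (fun i ↦ b i * Real.exp (-r i * τ)) (f τ))
include hf

lemma integrableOn_of_hasSum_exp : IntegrableOn f (Set.Ioi 0) :=
  integrable_of_hasSum (integrableOn_const_mul_exp_neg_mul hr)
    (summable_integral_norm_const_mul_exp_neg_mul hr hsum)
    (ae_restrict_of_forall_mem measurableSet_Ioi hf)

lemma integral_eq_tsum_of_hasSum_exp : ∫ τ in Set.Ioi (0 : ℝ), f τ = ∑' i, b i / r i := by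
  have h := integral_tsum_of_summable_integral_norm (integrableOn_const_mul_exp_neg_mul hr)
    (summable_integral_norm_const_mul_exp_neg_mul hr hsum)
  simp only [integral_const_mul, integral_exp_neg_mul_Ioi_zero (hr _), mul_one_div] at h
  rw [h]
  exact setIntegral_congr_fun measurableSet_Ioi fun τ hτ ↦ (hf τ hτ).tsum_eq.symm

end ExponentialSeries

lemma summable_one_div_add_sq_add_sq (a y : ℝ) :
    Summable fun k : ℤ ↦ 1 / ((k + a) ^ 2 + y ^ 2) := by
  refine (EisensteinSeries.linear_right_summable (a + y * Complex.I) 1 le_rfl).norm.congr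
    fun k ↦ ?_
  rw [norm_inv, norm_zpow, zpow_ofNat, ← Complex.normSq_eq_norm_sq, one_div, Int.cast_one, one_mul,
    add_right_comm, ← Complex.ofReal_intCast, ← Complex.ofReal_add, Complex.normSq_add_mul_I,
    add_comm a]

lemma summable_abs_neg_one_zpow_div (c a y : ℝ) :
    Summable fun k : ℤ ↦ |(-1 : ℝ) ^ k| / (c * ((k + a) ^ 2 + y ^ 2)) := by
  simpa only [abs_neg_one_zpow, one_div_mul_one_div] using
    (summable_one_div_add_sq_add_sq a y).mul_left (1 / c)

section AltTheta

variable {c : ℝ} (hc : 0 < c) {y : ℝ} (hy : y ≠ 0) (a : ℝ)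
include hc

lemma hasSum_exp_mul_altTheta {τ : ℝ} (hτ : 0 < τ) :
    HasSum (fun k : ℤ ↦ (-1) ^ k * Real.exp (-(c * ((k + a) ^ 2 + y ^ 2)) * τ))
      (Real.exp (-(c * y ^ 2 * τ)) * altTheta (c * τ) a) := by
  refine ((hasSum_altTheta (mul_pos hc hτ) a).mul_left _).congr_fun fun k ↦ ?_
  rw [mul_left_comm, ← Real.exp_add]
  ring_nf

include hy

lemma integrableOn_exp_mul_altTheta :
    IntegrableOn (fun τ ↦ Real.exp (-(c * y ^ 2 * τ)) * altTheta (c * τ) a) (Set.Ioi 0) :=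
  integrableOn_of_hasSum_exp (fun _ ↦ by positivity) (summable_abs_neg_one_zpow_div c a y)
    fun _ hτ ↦ hasSum_exp_mul_altTheta hc a hτ

lemma integral_exp_mul_altTheta :
    ∫ τ in Set.Ioi (0 : ℝ), Real.exp (-(c * y ^ 2 * τ)) * altTheta (c * τ) a =
      1 / c * ∑' k : ℤ, (-1) ^ k / ((k + a) ^ 2 + y ^ 2) := by
  rw [integral_eq_tsum_of_hasSum_exp (fun _ ↦ by positivity) (summable_abs_neg_one_zpow_div c a y)
    fun _ hτ ↦ hasSum_exp_mul_altTheta hc a hτ,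
    ← tsum_mul_left]
  simp only [one_div_mul_eq_div, div_div, mul_comm c]

end AltTheta

end LaplaceTransform

section MittagLeffler

open Complex

lemma hasSum_int_of_even_of_odd {M : Type*} [AddCommMonoid M] [TopologicalSpace M] [ContinuousAdd M]
    {f : ℤ → M} {a b : M} (heven : HasSum (fun k ↦ f (2 * k)) a)
    (hodd : HasSum (fun k ↦ f (2 * k + 1)) b) : HasSum f (a + b) := by
  have hinj : Function.Injective fun k : ℤ ↦ 2 * k := mul_right_injective₀ two_ne_zero
  have hodd' := ((add_left_injective 1).comp hinj).hasSum_range_iff.mpr hodd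
  refine (hinj.hasSum_range_iff.mpr heven).add_isCompl ?_ hodd'
  simpa [Function.comp_def] using Int.isCompl_even_odd

lemma summable_one_div_add_sub_one_div_add {v w : ℂ} (hv : v ∈ integerComplement)
    (hw : w ∈ integerComplement) :
    Summable fun k : ℤ ↦ 1 / (v + k) - 1 / (w + k) := by
  have hsq (z : ℂ) : Summable fun k : ℤ ↦ ‖z + k‖⁻¹ ^ 2 := by
    simpa using (EisensteinSeries.linear_right_summable z 1 le_rfl).norm
  refine Summable.of_norm_bounded (((hsq v).add (hsq w)).mul_left (‖w - v‖ / 2)) fun k ↦ ?_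
  have hvk : v + k ≠ 0 := integerComplement_add_ne_zero hv k
  have hwk : w + k ≠ 0 := integerComplement_add_ne_zero hw k
  rw [div_sub_div _ _ hvk hwk, show 1 * (w + k) - (v + k) * 1 = w - v by ring, norm_div, norm_mul,
    div_eq_mul_inv, mul_inv, div_mul_eq_mul_div, mul_div_assoc]
  gcongr
  linarith [two_mul_le_add_sq ‖v + k‖⁻¹ ‖w + k‖⁻¹]

lemma hasSum_one_div_add_sub_one_div_add {v w : ℂ} (hv : v ∈ integerComplement)
    (hw : w ∈ integerComplement) :
    HasSum (fun k : ℤ ↦ 1 / (v + k) - 1 / (w + k)) (π * cot (π * v) - π * cot (π * w)) := by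
  have hsum := summable_one_div_add_sub_one_div_add hv hw
  have hpos : Summable fun n : ℕ ↦ 1 / (v + (n + 1 : ℤ)) - 1 / (w + (n + 1 : ℤ)) :=
    hsum.comp_injective (i := fun n : ℕ ↦ (n + 1 : ℤ)) fun m n h ↦ by lia
  have hneg : Summable fun n : ℕ ↦
      1 / (v + (-(n + 1 : ℤ) : ℤ)) - 1 / (w + (-(n + 1 : ℤ) : ℤ)) :=
    hsum.comp_injective (i := fun n : ℕ ↦ -(n + 1 : ℤ)) fun m n h ↦ by lia
  have hcot : π * cot (π * v) - π * cot (π * w) - (1 / v - 1 / w) =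
      ∑' n : ℕ, ((1 / (v + (n + 1 : ℤ)) - 1 / (w + (n + 1 : ℤ))) +
        (1 / (v + (-(n + 1 : ℤ) : ℤ)) - 1 / (w + (-(n + 1 : ℤ) : ℤ)))) := by
    rw [sub_sub_sub_comm, cot_series_rep' hv, cot_series_rep' hw,
      ← (summable_cotTerm hv).tsum_sub (summable_cotTerm hw)]
    refine tsum_congr fun n ↦ ?_
    push_cast
    ring
  have hint := HasSum.of_add_one_of_neg_add_one
    (f := fun k : ℤ ↦ 1 / (v + k) - 1 / (w + k)) hpos.hasSum hneg.hasSum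
  rw [add_right_comm, ← hpos.tsum_add hneg, ← hcot] at hint
  simpa only [Int.cast_zero, add_zero, sub_add_cancel] using hint

lemma cot_sub_cot_add_pi_div_two (z : ℂ) : cot z - cot (z + π / 2) = 2 / sin (2 * z) := by
  rw [cot, cot, cos_add_pi_div_two, sin_add_pi_div_two, sin_two_mul]
  rcases eq_or_ne (sin z) 0 with hs | hs
  · simp [hs]
  rcases eq_or_ne (cos z) 0 with hc | hc
  · simp [hc]
  field_simp
  rw [sub_neg_eq_add, cos_sq_add_sin_sq]

lemma add_intCast_div_two_mem_integerComplement {z : ℂ} (hz : z ∈ integerComplement) (m : ℤ) :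
    (z + m) / 2 ∈ integerComplement := by
  rintro ⟨n, hn⟩
  refine hz ⟨2 * n - m, ?_⟩
  push_cast
  linear_combination 2 * hn

lemma hasSum_neg_one_zpow_mul_one_div_add_sub_one_div_add {v w : ℂ} (hv : v ∈ integerComplement)
    (hw : w ∈ integerComplement) : HasSum (fun k : ℤ ↦ (-1) ^ k * (1 / (v + k) - 1 / (w + k)))
      (π / sin (π * v) - π / sin (π * w)) := by
  have hhalf (m : ℤ) := (hasSum_one_div_add_sub_one_div_add
    (add_intCast_div_two_mem_integerComplement hv m)
    (add_intCast_div_two_mem_integerComplement hw m)).mul_left (1 / 2)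
  have hdiv (z : ℂ) (m k : ℤ) : 1 / (z + (2 * k + m : ℤ)) = 1 / 2 * (1 / ((z + m) / 2 + k)) := by
    rw [one_div_mul_one_div]
    push_cast
    ring_nf
  have hcot (z : ℂ) : π / sin (π * z) =
      1 / 2 * (π * cot (π * ((z + (0 : ℤ)) / 2)) - π * cot (π * ((z + (1 : ℤ)) / 2))) := by
    have h := cot_sub_cot_add_pi_div_two (π * z / 2)
    rw [mul_div_cancel₀ _ two_ne_zero, ← add_div, ← mul_add_one] at h
    push_cast
    rw [add_zero, ← mul_sub, ← mul_div_assoc, ← mul_div_assoc, h]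
    ring
  have heven (k : ℤ) : (-1) ^ (2 * k) * (1 / (v + (2 * k : ℤ)) - 1 / (w + (2 * k : ℤ))) =
      1 / 2 * (1 / ((v + (0 : ℤ)) / 2 + k) - 1 / ((w + (0 : ℤ)) / 2 + k)) := by
    rw [(even_two_mul k).neg_one_zpow, one_mul, mul_sub, ← hdiv, ← hdiv, add_zero]
  have hodd (k : ℤ) : (-1) ^ (2 * k + 1) *
      (1 / (v + (2 * k + 1 : ℤ)) - 1 / (w + (2 * k + 1 : ℤ))) =
        -(1 / 2 * (1 / ((v + (1 : ℤ)) / 2 + k) - 1 / ((w + (1 : ℤ)) / 2 + k))) := by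
    rw [(odd_two_mul_add_one k).neg_one_zpow, neg_one_mul, mul_sub, ← hdiv, ← hdiv]
  convert! hasSum_int_of_even_of_odd (f := fun k : ℤ ↦ (-1) ^ k * (1 / (v + k) - 1 / (w + k)))
    ((hhalf 0).congr_fun heven) ((hhalf 1).neg.congr_fun hodd) using 1
  rw [hcot v, hcot w]
  ring

lemma ofReal_add_ofReal_mul_I_mem_integerComplement (a : ℝ) {y : ℝ} (hy : y ≠ 0) :
    a + y * I ∈ integerComplement := by
  rintro ⟨n, hn⟩
  have him := congrArg im hn
  simp only [intCast_im, add_im, ofReal_im, mul_I_im, ofReal_re, zero_add] at him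
  exact hy him.symm

lemma pi_div_sin_sub_pi_div_sin_conj (a : ℝ) {y : ℝ} (hy : y ≠ 0) :
    π / sin (π * (a + (-y : ℝ) * I)) - π / sin (π * (a + y * I)) =
      2 * y * I *
        (π / y * (cos (π * a) * sinh (π * y) / (cosh (π * y) ^ 2 - cos (π * a) ^ 2))) := by
  have hsinv := sin_pi_mul_ne_zero
    (ofReal_add_ofReal_mul_I_mem_integerComplement a (neg_ne_zero.mpr hy))
  have hsinw := sin_pi_mul_ne_zero (ofReal_add_ofReal_mul_I_mem_integerComplement a hy)
  have hv : sin (π * (a + (-y : ℝ) * I)) =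
      sin (π * a) * cosh (π * y) - cos (π * a) * sinh (π * y) * I := by
    rw [ofReal_neg, mul_add, ← mul_assoc, mul_neg, sin_add_mul_I, cosh_neg, sinh_neg]
    ring
  have hw : sin (π * (a + y * I)) =
      sin (π * a) * cosh (π * y) + cos (π * a) * sinh (π * y) * I := by
    rw [mul_add, ← mul_assoc, sin_add_mul_I]
  have hdenom : sin (π * (a + (-y : ℝ) * I)) * sin (π * (a + y * I)) =
      cosh (π * y) ^ 2 - cos (π * a) ^ 2 := by
    rw [hv, hw]
    linear_combination -(cos (π * a) * sinh (π * y)) ^ 2 * I_sq +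
      cosh (π * y) ^ 2 * sin_sq_add_cos_sq (π * a) - cos (π * a) ^ 2 * cosh_sq_sub_sinh_sq (π * y)
  have hy' : (y : ℂ) ≠ 0 := ofReal_ne_zero.mpr hy
  rw [div_sub_div _ _ hsinv hsinw, hdenom, hv, hw]
  field_simp
  ring

lemma tsum_neg_one_zpow_div_add_sq_add_sq (a : ℝ) {y : ℝ} (hy : y ≠ 0) :
    ∑' k : ℤ, (-1 : ℝ) ^ k / ((k + a) ^ 2 + y ^ 2) =
      π / y * (Real.cos (π * a) * Real.sinh (π * y) /
        (Real.cosh (π * y) ^ 2 - Real.cos (π * a) ^ 2)) := by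
  have hv := ofReal_add_ofReal_mul_I_mem_integerComplement a (neg_ne_zero.mpr hy)
  have hw := ofReal_add_ofReal_mul_I_mem_integerComplement a hy
  have hterm (k : ℤ) : (-1) ^ k * (1 / (a + (-y : ℝ) * I + k) - 1 / (a + y * I + k)) =
      2 * y * I * ((-1) ^ k / ((k + a) ^ 2 + y ^ 2)) := by
    have hprod : (k + a : ℂ) ^ 2 + y ^ 2 = (a + (-y : ℝ) * I + k) * (a + y * I + k) := by
      push_cast
      linear_combination (y : ℂ) ^ 2 * I_sq
    rw [hprod, div_sub_div _ _ (integerComplement_add_ne_zero hv k)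
      (integerComplement_add_ne_zero hw k), ← mul_div_assoc, ← mul_div_assoc]
    congr 1
    push_cast
    ring
  have hsum := (hasSum_neg_one_zpow_mul_one_div_add_sub_one_div_add hv hw).tsum_eq
  simp only [hterm, tsum_mul_left] at hsum
  rw [pi_div_sin_sub_pi_div_sin_conj a hy] at hsum
  have hscale : 2 * (y : ℂ) * I ≠ 0 :=
    mul_ne_zero (mul_ne_zero two_ne_zero (ofReal_ne_zero.mpr hy)) I_ne_zero
  refine ofReal_injective ?_
  push_cast
  exact mul_left_cancel₀ hscale hsum

end MittagLeffler

section OneArm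

lemma mul_eta_quotient_eq_altTheta (w : ℝ) {τ : ℝ} (hτ : 0 < τ) (r : ℝ) :
    (w : ℂ) *
        ((1 - r * (eta (6 * τ * Complex.I) * eta ((3 / 2) * τ * Complex.I)) /
            (eta (2 * τ * Complex.I) * eta (3 * τ * Complex.I))) * eta (2 * τ * Complex.I)) =
      ((w * altTheta (6 * π * τ) (1 / 6) - r * (w * altTheta (6 * π * τ) (1 / 4)) : ℝ) : ℂ) := by
  have heta {m : ℝ} (hm : 0 < m) : eta (m * τ * Complex.I) = etaImag (m * τ) := by
    rw [← Complex.ofReal_mul, eta_ofReal_mul_I (mul_pos hm hτ)]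
  have heta2_ne := etaImag_ne_zero (mul_pos two_pos hτ)
  have heta3_ne := etaImag_ne_zero (mul_pos three_pos hτ)
  have hsixth : altTheta (6 * π * τ) (1 / 6) = etaImag (2 * τ) := by
    rw [← altTheta_one_sixth (mul_pos two_pos hτ)]
    ring_nf
  have hfourth : altTheta (6 * π * τ) (1 / 4) =
      etaImag (6 * τ) * etaImag (3 / 2 * τ) / etaImag (3 * τ) := by
    rw [eq_div_iff heta3_ne]
    convert! altTheta_one_fourth_mul_etaImag (mul_pos three_pos hτ) using 3 <;> ring
  have heta6 := heta (m := 6) (by norm_num)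
  have heta32 := heta (m := 3 / 2) (by norm_num)
  have heta2 := heta two_pos
  have heta3 := heta three_pos
  push_cast at heta6 heta32 heta2 heta3
  rw [heta6, heta32, heta2, heta3, hsixth, hfourth]
  norm_cast
  generalize etaImag (2 * τ) = e₂ at heta2_ne ⊢
  generalize etaImag (3 * τ) = e₃ at heta3_ne ⊢
  field_simp

lemma cos_mul_sinh_div_sub_sqrt_mul (u : ℝ) :
    Real.cos (π * (1 / 6)) * Real.sinh u / (Real.cosh u ^ 2 - Real.cos (π * (1 / 6)) ^ 2) -
      √(3 / 2) * (Real.cos (π * (1 / 4)) * Real.sinh u /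
        (Real.cosh u ^ 2 - Real.cos (π * (1 / 4)) ^ 2)) =
      √3 / 2 * (Real.tanh (2 * u) / Real.cosh (3 * u)) := by
  have hcosh := Real.one_le_cosh u
  have hsq : 1 ≤ Real.cosh u ^ 2 := one_le_pow₀ hcosh
  have hsixth : Real.cos (π * (1 / 6)) = √3 / 2 := by rw [mul_one_div, Real.cos_pi_div_six]
  have hfourth : Real.cos (π * (1 / 4)) = √2 / 2 := by rw [mul_one_div, Real.cos_pi_div_four]
  have h32 : √(3 / 2) * (√2 / 2) = √3 / 2 := by
    rw [← mul_div_assoc, ← Real.sqrt_mul (by norm_num), div_mul_cancel₀ _ two_ne_zero]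
  have hcosh2 : Real.cosh (2 * u) = 2 * Real.cosh u ^ 2 - 1 := by
    rw [Real.cosh_two_mul, Real.sinh_sq]
    ring
  have hcosh3 : Real.cosh (3 * u) = Real.cosh u * (4 * Real.cosh u ^ 2 - 3) := by
    rw [Real.cosh_three_mul]
    ring
  rw [hsixth, hfourth, mul_div_assoc, mul_div_assoc (√2 / 2), ← mul_assoc, h32, ← mul_sub,
    div_pow, div_pow, Real.sq_sqrt zero_le_three, Real.sq_sqrt zero_le_two,
    Real.tanh_eq_sinh_div_cosh, hcosh2, hcosh3, Real.sinh_two_mul]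
  have hdenom_sixth : Real.cosh u ^ 2 - 3 / 2 ^ 2 ≠ 0 := by linarith
  have hdenom_fourth : Real.cosh u ^ 2 - 2 / 2 ^ 2 ≠ 0 := by linarith
  have hcosh2_ne : 2 * Real.cosh u ^ 2 - 1 ≠ 0 := by linarith
  have hcosh3_ne : 4 * Real.cosh u ^ 2 - 3 ≠ 0 := by linarith
  have hcosh_ne : Real.cosh u ≠ 0 := by linarith
  congr 1
  rw [div_sub_div _ _ hdenom_sixth hdenom_fourth, div_div,
    div_eq_div_iff (mul_ne_zero hdenom_sixth hdenom_fourth)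
      (mul_ne_zero hcosh2_ne (mul_ne_zero hcosh_ne hcosh3_ne))]
  ring

end OneArm

theorem one_arm_laplace (x : ℝ) (hx : 0 < x) :
    ∫ τ in Set.Ioi (0 : ℝ),
        ((Real.exp (-(2 * Real.pi * x ^ 2 * τ / 3)) : ℝ) : ℂ) *
          ((1 - (Real.sqrt (3 / 2) : ℂ) *
              (eta (6 * τ * Complex.I) * eta ((3 / 2) * τ * Complex.I)) /
              (eta (2 * τ * Complex.I) * eta (3 * τ * Complex.I))) *
            eta (2 * τ * Complex.I)) =
      ((Real.sqrt 3 * Real.tanh (2 * Real.pi * x / 3) /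
          (4 * x * Real.cosh (Real.pi * x)) : ℝ) : ℂ) := by
  have hc : 0 < 6 * π := by positivity
  have hy : x / 3 ≠ 0 := by positivity
  have hexp (τ : ℝ) : 2 * π * x ^ 2 * τ / 3 = 6 * π * (x / 3) ^ 2 * τ := by ring
  have hint := integrableOn_exp_mul_altTheta hc hy
  rw [setIntegral_congr_fun measurableSet_Ioi fun τ hτ ↦ mul_eta_quotient_eq_altTheta _ hτ _,
    integral_complex_ofReal]
  simp only [hexp]
  rw [integral_sub (hint _) ((hint _).const_mul _), integral_const_mul,
    integral_exp_mul_altTheta hc hy, integral_exp_mul_altTheta hc hy,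
    tsum_neg_one_zpow_div_add_sq_add_sq _ hy, tsum_neg_one_zpow_div_add_sq_add_sq _ hy]
  congr 1
  have h2u : 2 * π * x / 3 = 2 * (π * (x / 3)) := by ring
  have h3u : π * x = 3 * (π * (x / 3)) := by ring
  rw [mul_left_comm √(3 / 2), mul_left_comm √(3 / 2), ← mul_sub, ← mul_sub,
    cos_mul_sinh_div_sub_sqrt_mul, h2u, h3u]
  field_simp
  ring
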